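/- Suppose p = b+1 and 2 ≤ ℓ ≤ b+1 = p. Then the trace of the linear endomorphism f ↦ ρ(g·f) of W equals (1/π_ℓ)·{ e_ℓ(n_1−1, n_2−1, …, n_ℓ−1) + (−1)^{ℓ−1} }. -/

import Mathlib

open Finset MvPolynomial

noncomputable section

/-- Value of the elementary symmetric polynomial `e_k` at the family `v` restricted to `A`. -/
def esymVal {α F : Type*} [DecidableEq α] [CommRing F] (A : Finset α) (k : ℕ) (v : α → F) : F :=
  ∑ B ∈ A.powersetCard k, ∏ i ∈ B, v i

/-- Pochhammer symbol `(a)_k = a (a+1) ⋯ (a+k-1)`. -/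
def poch (a : ℚ) (k : ℕ) : ℚ := ∏ i ∈ Finset.range k, (a + (i : ℚ))

variable {p : ℕ}

/-- The index in `Fin (∑ t, n t)` of the `i`-th element of the `j`-th consecutive block. -/
def emb (n : Fin p → ℕ) (j : Fin p) (i : Fin (n j)) : Fin (∑ t, n t) :=
  ⟨(∑ t ∈ Finset.univ.filter (fun t => t < j), n t) + i, by
    have hj : j ∉ Finset.univ.filter (fun t => t < j) := by simp
    have h2 : ∑ t ∈ insert j (Finset.univ.filter (fun t => t < j)), n t ≤ ∑ t, n t :=
      Finset.sum_le_sum_of_subset (Finset.subset_univ _)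
    rw [Finset.sum_insert hj] at h2
    have := i.isLt
    omega⟩

/-- The Young subgroup: permutations mapping each block onto itself. -/
def youngGroup (n : Fin p → ℕ) : Finset (Equiv.Perm (Fin (∑ t, n t))) :=
  Finset.univ.filter fun w => ∀ (j : Fin p) (i : Fin (n j)), ∃ i' : Fin (n j),
    w (emb n j i) = emb n j i'

/-- The action of a permutation of the variables on polynomials, as a linear map. -/
def permAct {σ : Type*} (w : Equiv.Perm σ) :
    MvPolynomial σ ℚ →ₗ[ℚ] MvPolynomial σ ℚ :=
  (MvPolynomial.rename ⇑w).toLinearMap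

/-- Averaging operator over the Young subgroup. -/
def rho (n : Fin p → ℕ) :
    MvPolynomial (Fin (∑ t, n t)) ℚ →ₗ[ℚ] MvPolynomial (Fin (∑ t, n t)) ℚ :=
  ((youngGroup n).card : ℚ)⁻¹ • ∑ h ∈ youngGroup n, permAct h

/-- The alternating (Vandermonde) polynomial in the variables `x_{t 0}, …, x_{t b}`. -/
def Delta {N b : ℕ} (t : Fin (b + 1) → Fin N) : MvPolynomial (Fin N) ℚ :=
  ∏ q ∈ Finset.univ.filter (fun q : Fin (b + 1) × Fin (b + 1) => q.1 < q.2),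
    (X (t q.1) - X (t q.2))

/-- The span of all `Δ(x_{i₁},…,x_{i_{b+1}})` with `i₁ < ⋯ < i_{b+1}`. -/
def hookSpan (N b : ℕ) : Submodule ℚ (MvPolynomial (Fin N) ℚ) :=
  Submodule.span ℚ {f | ∃ t : Fin (b + 1) → Fin N, StrictMono t ∧ f = Delta t}

/-- The first `ℓ` block labels. -/
def firstL (p ℓ : ℕ) : Finset (Fin p) := Finset.univ.filter fun i => (i : ℕ) < ℓ

/-!
Since there are `b + 1` blocks, the Young-invariants of the hook module are spanned by the sum `F`
of all `Δ(x_t)` with `t` choosing one index in each block: `ρ` kills `Δ(x_t)` as soon as two indices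
of `t` share a block, because swapping them changes the sign of `Δ(x_t)`. Evaluating each variable
at (minus) its block label turns `Δ(x_t)` into a numerical Vandermonde determinant with the same
behaviour, hence `ρ f = c · (evaluation of f) · F` on the hook module, and the trace of
`f ↦ ρ (g · f)` is `c` times the evaluation of `g · F`. By multilinearity that is a determinant:
the trace equals `det (#{a ∈ I_j | g a ∈ I_k} / n_j)`. For a cycle of the blocks the numerator
matrix is `diag (n_j - 1)` plus a permutation matrix, whose Leibniz expansion has just two nonzero
terms.
-/

section Determinants

variable {ι R : Type*} [CommRing R]

lemma esymVal_card [DecidableEq ι] (A : Finset ι) (v : ι → R) :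
    esymVal A #A v = ∏ i ∈ A, v i := by
  rw [esymVal, powersetCard_self, sum_singleton]

lemma firstL_succ {m : ℕ} (i : Fin m) : firstL m (i + 1) = Iic i := by
  ext j
  simp only [firstL, mem_filter, mem_univ, true_and, mem_Iic, Fin.le_def, Order.lt_add_one_iff]

lemma support_cycleRange {m : ℕ} [NeZero m] {i : Fin m} (hi : i ≠ 0) :
    (Fin.cycleRange i).support = Iic i := by
  ext j
  rw [Equiv.Perm.mem_support, mem_Iic]
  rcases lt_trichotomy j i with hj | rfl | hj
  · refine iff_of_true (fun h => ?_) hj.le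
    have := Fin.coe_cycleRange_of_lt hj
    rw [h] at this
    omega
  · simpa using hi.symm
  · exact iff_of_false (not_not.mpr (Fin.cycleRange_of_gt hj)) hj.not_ge

lemma eq_one_or_eq_of_isCycle_of_forall_apply [Finite ι] {σ τ : Equiv.Perm ι} (hσ : σ.IsCycle)
    (h : ∀ i, τ i = i ∨ τ i = σ i) : τ = 1 ∨ τ = σ := by
  by_contra! hne
  obtain ⟨i, hi⟩ : ∃ i, τ i ≠ i := not_forall.mp fun h1 => hne.1 (Equiv.ext h1)
  have moves_iterate (k : ℕ) : τ ((σ ^ k) i) ≠ (σ ^ k) i := by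
    induction k with
    | zero => exact hi
    | succ k ih =>
      rw [pow_succ', Equiv.Perm.mul_apply, ← (h _).resolve_left ih]
      exact τ.injective.ne ih
  refine hne.2 (Equiv.ext fun j => (h j).elim (fun hj => ?_) id)
  by_contra hσj
  have hσi : σ i ≠ i := (h i).resolve_left hi ▸ hi
  obtain ⟨k, rfl⟩ := (hσ.sameCycle hσi fun hj' => hσj (hj.trans hj'.symm)).exists_nat_pow_eq
  exact moves_iterate k hj

lemma det_diagonal_add_permMatrix [Fintype ι] [DecidableEq ι] {σ : Equiv.Perm ι} (hσ : σ.IsCycle)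
    (v : ι → R) :
    (Matrix.diagonal v + σ.permMatrix R).det
      = (∏ i ∈ σ.support, v i + (Equiv.Perm.sign σ : ℤ)) * ∏ i ∈ σ.supportᶜ, (v i + 1) := by
  set M := Matrix.diagonal v + σ.permMatrix R with hM
  have entry (i j : ι) : M i j = (if i = j then v i else 0) + if σ i = j then 1 else 0 := by
    simp [hM, Matrix.diagonal_apply, Equiv.toPEquiv_apply, PEquiv.toMatrix_apply, eq_comm]
  have term_one : ∏ i, M i ((1 : Equiv.Perm ι) i)
      = (∏ i ∈ σ.support, v i) * ∏ i ∈ σ.supportᶜ, (v i + 1) := by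
    rw [← prod_mul_prod_compl σ.support]
    congr 1 <;> refine prod_congr rfl fun i hi => ?_ <;> simp_all
  have term_σ : ∏ i, M i (σ i) = ∏ i ∈ σ.supportᶜ, (v i + 1) := by
    rw [← prod_mul_prod_compl σ.support, prod_eq_one, one_mul]
    · refine prod_congr rfl fun i hi => ?_
      simp_all
    · intro i hi
      simp_all [eq_comm]
  have term_other (τ : Equiv.Perm ι) (hτ : τ ≠ 1 ∧ τ ≠ σ) : ∏ i, M i (τ i) = 0 := by
    contrapose! hτ
    refine or_iff_not_imp_left.mp (eq_one_or_eq_of_isCycle_of_forall_apply hσ fun i => ?_)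
    by_contra! hi
    exact hτ (prod_eq_zero (mem_univ i) (by simp [entry, hi.1.symm, hi.2.symm]))
  rw [← Matrix.det_transpose, Matrix.det_apply']
  simp only [Matrix.transpose_apply]
  rw [Fintype.sum_eq_add 1 σ hσ.ne_one.symm fun τ hτ => by rw [term_other τ hτ, mul_zero],
    term_one, term_σ]
  simp [add_mul]

end Determinants

section Vandermonde

lemma superFactorial_ne_zero (m : ℕ) : m.superFactorial ≠ 0 := by
  rw [← Nat.prod_range_factorial_succ]
  exact prod_ne_zero_iff.mpr fun k _ => (k + 1).factorial_ne_zero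

variable {N b : ℕ}

lemma Delta_eq_det_vandermonde (t : Fin (b + 1) → Fin N) :
    Delta t = (Matrix.vandermonde fun i => -(X (t i) : MvPolynomial (Fin N) ℚ)).det := by
  rw [Matrix.det_vandermonde, Delta, prod_filter, ← univ_product_univ, prod_product]
  refine prod_congr rfl fun i _ => ?_
  rw [← prod_filter, filter_lt_eq_Ioi]
  exact prod_congr rfl fun j _ => by ring

lemma Delta_comp_perm (t : Fin (b + 1) → Fin N) (σ : Equiv.Perm (Fin (b + 1))) :
    Delta (t ∘ σ) = (Equiv.Perm.sign σ : ℤ) • Delta t := by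
  rw [Delta_eq_det_vandermonde, Delta_eq_det_vandermonde, zsmul_eq_mul, ← Matrix.det_permute]
  rfl

lemma Delta_eq_zero_of_not_injective {t : Fin (b + 1) → Fin N} (ht : ¬ Function.Injective t) :
    Delta t = 0 := by
  obtain ⟨i, j, hij, hne⟩ := Function.not_injective_iff.mp ht
  rw [Delta_eq_det_vandermonde, Matrix.det_vandermonde_eq_zero_iff]
  exact ⟨i, j, by rw [hij], hne⟩

lemma permAct_mul (w w' : Equiv.Perm (Fin N)) (f : MvPolynomial (Fin N) ℚ) :
    permAct (w * w') f = permAct w (permAct w' f) := by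
  simp [permAct, rename_rename]

lemma permAct_Delta (w : Equiv.Perm (Fin N)) (t : Fin (b + 1) → Fin N) :
    permAct w (Delta t) = Delta (w ∘ t) := by
  simp [permAct, Delta, map_prod]

lemma permAct_swap_Delta (t : Fin (b + 1) → Fin N) {i j : Fin (b + 1)} (hij : i ≠ j) :
    permAct (Equiv.swap (t i) (t j)) (Delta t) = -Delta t := by
  by_cases ht : Function.Injective t
  · have swap_comp : Equiv.swap (t i) (t j) ∘ t = t ∘ Equiv.swap i j :=
      funext fun k => (ht.map_swap i j k).symm
    rw [permAct_Delta, swap_comp, Delta_comp_perm, Equiv.Perm.sign_swap hij]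
    simp
  · rw [Delta_eq_zero_of_not_injective ht, map_zero, neg_zero]

lemma Delta_mem_hookSpan (t : Fin (b + 1) → Fin N) : Delta t ∈ hookSpan N b := by
  by_cases ht : Function.Injective t
  · set σ := Tuple.sort t
    have sorted_mem : Delta (t ∘ σ) ∈ hookSpan N b :=
      Submodule.subset_span
        ⟨_, (Tuple.monotone_sort t).strictMono_of_injective (ht.comp σ.injective), rfl⟩
    have unsort : Delta t = (Equiv.Perm.sign σ⁻¹ : ℤ) • Delta (t ∘ σ) := by
      rw [← Delta_comp_perm]
      congr 1
      ext i
      simp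
    rw [unsort]
    exact zsmul_mem sorted_mem _
  · rw [Delta_eq_zero_of_not_injective ht]
    exact zero_mem _

lemma permAct_mem_hookSpan (w : Equiv.Perm (Fin N)) {f : MvPolynomial (Fin N) ℚ}
    (hf : f ∈ hookSpan N b) : permAct w f ∈ hookSpan N b := by
  suffices hookSpan N b ≤ (hookSpan N b).comap (permAct w) from this hf
  refine Submodule.span_le.mpr ?_
  rintro _ ⟨t, -, rfl⟩
  rw [SetLike.mem_coe, Submodule.mem_comap, permAct_Delta]
  exact Delta_mem_hookSpan _

instance finite_hookSpan (N b : ℕ) : Module.Finite ℚ (hookSpan N b) :=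
  Module.Finite.span_of_finite ℚ <| (Set.finite_range (Delta (N := N) (b := b))).subset <| by
    rintro _ ⟨t, -, rfl⟩
    exact ⟨t, rfl⟩

end Vandermonde

section Blocks

variable (n : Fin p → ℕ)

lemma emb_eq_finSigmaFinEquiv (j : Fin p) (i : Fin (n j)) :
    emb n j i = finSigmaFinEquiv ⟨j, i⟩ := by
  have filter_lt : univ.filter (· < j) = univ.map (Fin.castLEEmb j.2.le) := by
    ext k
    simp only [mem_filter, mem_univ, true_and, mem_map]
    exact ⟨fun h => ⟨⟨k, h⟩, rfl⟩, by rintro ⟨i, rfl⟩; exact i.2⟩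
  ext
  simp [emb, filter_lt]

/-- The label `j` of the block `I_j` that contains a given index. -/
def blockIndex (a : Fin (∑ t, n t)) : Fin p := (finSigmaFinEquiv.symm a).1

/-- The block `I_j`, as a set of indices. -/
def block (j : Fin p) : Finset (Fin (∑ t, n t)) := univ.filter (blockIndex n · = j)

variable {n}

@[simp]
lemma mem_block {j : Fin p} {a : Fin (∑ t, n t)} : a ∈ block n j ↔ blockIndex n a = j := by
  simp [block]

@[simp]
lemma blockIndex_emb (j : Fin p) (i : Fin (n j)) : blockIndex n (emb n j i) = j := by
  simp [blockIndex, emb_eq_finSigmaFinEquiv]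

lemma exists_emb_eq {a : Fin (∑ t, n t)} {j : Fin p} (h : blockIndex n a = j) :
    ∃ i, emb n j i = a := by
  subst h
  exact ⟨(finSigmaFinEquiv.symm a).2,
    (emb_eq_finSigmaFinEquiv n _ _).trans (finSigmaFinEquiv.apply_symm_apply a)⟩

lemma emb_injective (j : Fin p) : Function.Injective (emb n j) := fun i i' h => by
  simpa [emb, Fin.ext_iff] using h

lemma card_block (j : Fin p) : #(block n j) = n j := by
  have block_eq_map : block n j = univ.map ⟨emb n j, emb_injective j⟩ := by
    ext a
    simp only [mem_block, mem_map, mem_univ, true_and]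
    exact ⟨exists_emb_eq, by rintro ⟨i, rfl⟩; exact blockIndex_emb j i⟩
  rw [block_eq_map, card_map, card_fin]

lemma mem_youngGroup {w : Equiv.Perm (Fin (∑ t, n t))} :
    w ∈ youngGroup n ↔ ∀ a, blockIndex n (w a) = blockIndex n a := by
  simp only [youngGroup, mem_filter, mem_univ, true_and]
  refine ⟨fun h a => ?_, fun h j i => ?_⟩
  · obtain ⟨i, hi⟩ := exists_emb_eq (rfl : blockIndex n a = _)
    obtain ⟨i', hi'⟩ := h (blockIndex n a) i
    rw [hi] at hi'
    rw [hi', blockIndex_emb]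
  · obtain ⟨i', hi'⟩ := exists_emb_eq ((h (emb n j i)).trans (blockIndex_emb j i))
    exact ⟨i', hi'.symm⟩

lemma swap_mem_youngGroup {a a' : Fin (∑ t, n t)} (h : blockIndex n a = blockIndex n a') :
    Equiv.swap a a' ∈ youngGroup n := by
  refine mem_youngGroup.mpr fun c => ?_
  rw [Equiv.swap_apply_def]
  split_ifs with hc hc' <;> simp [*]

lemma exists_mem_youngGroup_comp_eq {s t : Fin p → Fin (∑ t, n t)}
    (hs : ∀ j, blockIndex n (s j) = j) (ht : ∀ j, blockIndex n (t j) = j) :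
    ∃ w ∈ youngGroup n, w ∘ s = t := by
  choose c hc using fun j => exists_emb_eq (hs j)
  choose d hd using fun j => exists_emb_eq (ht j)
  refine ⟨finSigmaFinEquiv.permCongr (Equiv.sigmaCongrRight fun j => Equiv.swap (c j) (d j)),
    mem_youngGroup.mpr fun a => by simp [blockIndex, Equiv.permCongr_apply], funext fun j => ?_⟩
  rw [Function.comp_apply, ← hc, ← hd, emb_eq_finSigmaFinEquiv, emb_eq_finSigmaFinEquiv,
    Equiv.permCongr_apply]
  simp

lemma rho_apply (f : MvPolynomial (Fin (∑ t, n t)) ℚ) :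
    rho n f = (#(youngGroup n) : ℚ)⁻¹ • ∑ h ∈ youngGroup n, permAct h f := by
  simp [rho]

lemma rho_permAct {w : Equiv.Perm (Fin (∑ t, n t))} (hw : w ∈ youngGroup n)
    (f : MvPolynomial (Fin (∑ t, n t)) ℚ) : rho n (permAct w f) = rho n f := by
  rw [rho_apply, rho_apply]
  congr 1
  refine sum_equiv (Equiv.mulRight w) (fun h => ?_) fun h _ => (permAct_mul h w f).symm
  rw [mem_youngGroup] at hw
  simp only [mem_youngGroup, Equiv.coe_mulRight, Equiv.Perm.mul_apply]
  refine ⟨fun hh a => by rw [hh, hw], fun hh a => ?_⟩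
  obtain ⟨c, rfl⟩ := w.surjective a
  rw [hh, hw]

lemma rho_eq_self {f : MvPolynomial (Fin (∑ t, n t)) ℚ}
    (hf : ∀ w ∈ youngGroup n, permAct w f = f) : rho n f = f := by
  have one_mem : 1 ∈ youngGroup n := mem_youngGroup.mpr fun _ => rfl
  have card_ne_zero : (#(youngGroup n) : ℚ) ≠ 0 :=
    Nat.cast_ne_zero.mpr (card_ne_zero_of_mem one_mem)
  rw [rho_apply, sum_congr rfl hf, sum_const, ← Nat.cast_smul_eq_nsmul ℚ,
    inv_smul_smul₀ card_ne_zero]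

end Blocks

section Trace

variable {b : ℕ}

/-- The evaluation of each variable at minus the label of its block; the sign makes the image of
`Δ(x_t)` the Vandermonde determinant of the block labels of `t`, see `labelEval_Delta`. -/
def labelEval (n : Fin p → ℕ) : MvPolynomial (Fin (∑ t, n t)) ℚ →ₐ[ℚ] ℚ :=
  aeval fun a => -(blockIndex n a : ℚ)

/-- The index tuples that pick one element of each block, in order. -/
def transversals (n : Fin p → ℕ) : Finset (Fin p → Fin (∑ t, n t)) :=
  Fintype.piFinset (block n)

/-- The spanning vector of the Young-invariants of the hook module. -/
def transversalSum (n : Fin (b + 1) → ℕ) : MvPolynomial (Fin (∑ t, n t)) ℚ :=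
  ∑ t ∈ transversals n, Delta t

/-- The matrix whose `(j, k)` entry counts the indices that `g` moves from block `j` to block
`k`. -/
def transitionMatrix (n : Fin p → ℕ) (g : Equiv.Perm (Fin (∑ t, n t))) :
    Matrix (Fin p) (Fin p) ℚ :=
  Matrix.of fun j k => #{a ∈ block n j | blockIndex n (g a) = k}

lemma mem_transversals {n : Fin p → ℕ} {t : Fin p → Fin (∑ t, n t)} :
    t ∈ transversals n ↔ ∀ j, blockIndex n (t j) = j := by
  simp [transversals]

lemma card_transversals (n : Fin p → ℕ) : #(transversals n) = ∏ j, n j := by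
  simp [transversals, card_block]

variable {n : Fin (b + 1) → ℕ}

lemma labelEval_Delta (t : Fin (b + 1) → Fin (∑ t, n t)) :
    labelEval n (Delta t) = (Matrix.vandermonde fun i => (blockIndex n (t i) : ℚ)).det := by
  rw [Delta_eq_det_vandermonde, AlgHom.map_det]
  congr 1
  ext i j
  simp [labelEval, Matrix.vandermonde_apply]

lemma labelEval_Delta_of_mem_transversals {t : Fin (b + 1) → Fin (∑ t, n t)}
    (ht : t ∈ transversals n) : labelEval n (Delta t) = b.superFactorial := by
  simp_rw [labelEval_Delta, mem_transversals.mp ht]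
  exact Matrix.det_vandermonde_id_eq_superFactorial b

lemma transversalSum_mem_hookSpan : transversalSum n ∈ hookSpan (∑ t, n t) b :=
  sum_mem fun t _ => Delta_mem_hookSpan t

lemma permAct_transversalSum {w : Equiv.Perm (Fin (∑ t, n t))} (hw : w ∈ youngGroup n) :
    permAct w (transversalSum n) = transversalSum n := by
  rw [transversalSum, map_sum]
  refine sum_equiv (Equiv.piCongrRight fun _ => w) (fun t => ?_) fun t _ => permAct_Delta w t
  simp [mem_transversals, mem_youngGroup.mp hw]

lemma rho_Delta_of_mem_transversals {t : Fin (b + 1) → Fin (∑ t, n t)} (ht : t ∈ transversals n) :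
    rho n (Delta t) = (∏ j, (n j : ℚ))⁻¹ • transversalSum n := by
  have rho_Delta_eq {s} (hs : s ∈ transversals n) : rho n (Delta s) = rho n (Delta t) := by
    obtain ⟨w, hw, rfl⟩ :=
      exists_mem_youngGroup_comp_eq (mem_transversals.mp hs) (mem_transversals.mp ht)
    rw [← permAct_Delta, rho_permAct hw]
  have prod_ne_zero : ∏ j, (n j : ℚ) ≠ 0 := by
    rw [← Nat.cast_prod, ← card_transversals]
    exact Nat.cast_ne_zero.mpr (card_ne_zero_of_mem ht)
  rw [eq_inv_smul_iff₀ prod_ne_zero]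
  calc (∏ j, (n j : ℚ)) • rho n (Delta t) = ∑ s ∈ transversals n, rho n (Delta s) := by
        rw [sum_congr rfl fun s hs => rho_Delta_eq hs, sum_const, card_transversals,
          ← Nat.cast_smul_eq_nsmul ℚ, Nat.cast_prod]
    _ = rho n (transversalSum n) := by rw [transversalSum, map_sum]
    _ = transversalSum n := rho_eq_self fun w hw => permAct_transversalSum hw

lemma rho_Delta_of_not_injective {t : Fin (b + 1) → Fin (∑ t, n t)}
    (ht : ¬ Function.Injective (blockIndex n ∘ t)) : rho n (Delta t) = 0 := by
  obtain ⟨i, j, hij, hne⟩ := Function.not_injective_iff.mp ht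
  have := rho_permAct (swap_mem_youngGroup hij) (Delta t)
  rw [permAct_swap_Delta t hne, map_neg] at this
  exact self_eq_neg.mp this.symm

lemma rho_Delta (t : Fin (b + 1) → Fin (∑ t, n t)) :
    rho n (Delta t)
      = ((∏ j, (n j : ℚ))⁻¹ * (b.superFactorial : ℚ)⁻¹ * labelEval n (Delta t)) •
        transversalSum n := by
  by_cases ht : Function.Injective (blockIndex n ∘ t)
  · obtain ⟨σ, hσ⟩ : ∃ σ : Equiv.Perm (Fin (b + 1)), ⇑σ = blockIndex n ∘ t :=
      ⟨Equiv.ofBijective _ (Finite.injective_iff_bijective.mp ht), rfl⟩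
    obtain ⟨s, rfl⟩ : ∃ s, t = s ∘ σ := ⟨t ∘ σ.symm, by ext; simp⟩
    have hs : s ∈ transversals n := mem_transversals.mpr fun j => by
      simpa using (congrFun hσ (σ.symm j)).symm
    rw [Delta_comp_perm, map_zsmul, map_zsmul, rho_Delta_of_mem_transversals hs,
      labelEval_Delta_of_mem_transversals hs, mul_smul_comm,
      inv_mul_cancel_right₀ (Nat.cast_ne_zero.mpr (superFactorial_ne_zero b)), smul_assoc]
  · have labelEval_eq_zero : labelEval n (Delta t) = 0 := by
      obtain ⟨i, j, hij, hne⟩ := Function.not_injective_iff.mp ht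
      rw [labelEval_Delta, Matrix.det_vandermonde_eq_zero_iff]
      exact ⟨i, j, congrArg (fun k : Fin (b + 1) => (k : ℚ)) hij, hne⟩
    rw [rho_Delta_of_not_injective ht, labelEval_eq_zero, mul_zero, zero_smul]

lemma rho_of_mem_hookSpan {f : MvPolynomial (Fin (∑ t, n t)) ℚ}
    (hf : f ∈ hookSpan (∑ t, n t) b) :
    rho n f
      = ((∏ j, (n j : ℚ))⁻¹ * (b.superFactorial : ℚ)⁻¹ * labelEval n f) • transversalSum n := by
  have eqOn_span := LinearMap.eqOn_span (f := rho n)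
    (g := (((∏ j, (n j : ℚ))⁻¹ * (b.superFactorial : ℚ)⁻¹) •
      (labelEval n).toLinearMap).smulRight (transversalSum n))
    (s := {f | ∃ t : Fin (b + 1) → Fin (∑ t, n t), StrictMono t ∧ f = Delta t})
    (by rintro _ ⟨t, -, rfl⟩; exact rho_Delta t)
  exact eqOn_span hf

lemma labelEval_permAct_transversalSum (g : Equiv.Perm (Fin (∑ t, n t))) :
    labelEval n (permAct g (transversalSum n))
      = (transitionMatrix n g).det * b.superFactorial := by
  set V : Matrix (Fin (b + 1)) (Fin (b + 1)) ℚ := Matrix.vandermonde fun i => (i : ℚ)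
  have row_eq (j : Fin (b + 1)) :
      (transitionMatrix n g * V) j = ∑ a ∈ block n j, V (blockIndex n (g a)) := by
    ext i
    rw [Matrix.mul_apply, Finset.sum_apply, ← sum_fiberwise _ fun a => blockIndex n (g a)]
    refine sum_congr rfl fun k _ => ?_
    rw [sum_congr rfl fun a ha => by rw [(mem_filter.mp ha).2], sum_const, nsmul_eq_mul]
    rfl
  calc labelEval n (permAct g (transversalSum n))
      = ∑ t ∈ transversals n, Matrix.detRowAlternating fun j => V (blockIndex n (g (t j))) := by
        rw [transversalSum, map_sum, map_sum]
        refine sum_congr rfl fun t _ => ?_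
        rw [permAct_Delta, labelEval_Delta]
        rfl
    _ = Matrix.detRowAlternating fun j => ∑ a ∈ block n j, V (blockIndex n (g a)) :=
        (Matrix.detRowAlternating.toMultilinearMap.map_sum_finset
          (fun _ a => V (blockIndex n (g a))) (block n)).symm
    _ = (transitionMatrix n g * V).det := congrArg Matrix.det (funext row_eq).symm
    _ = (transitionMatrix n g).det * b.superFactorial := by
        rw [Matrix.det_mul, Matrix.det_vandermonde_id_eq_superFactorial]

theorem trace_rho_comp_permAct (g : Equiv.Perm (Fin (∑ t, n t)))
    (hW : ∀ f ∈ hookSpan (∑ t, n t) b,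
      ((rho n).comp (permAct g)) f ∈ hookSpan (∑ t, n t) b) :
    LinearMap.trace ℚ (hookSpan (∑ t, n t) b) (((rho n).comp (permAct g)).restrict hW)
      = (∏ j, (n j : ℚ))⁻¹ * (transitionMatrix n g).det := by
  set c : ℚ := (∏ j, (n j : ℚ))⁻¹ * (b.superFactorial : ℚ)⁻¹ with hc
  set φ : hookSpan (∑ t, n t) b →ₗ[ℚ] ℚ :=
    c • (labelEval n).toLinearMap ∘ₗ permAct g ∘ₗ (hookSpan (∑ t, n t) b).subtype with hφ
  have rank_one : ((rho n).comp (permAct g)).restrict hW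
      = φ.smulRight ⟨transversalSum n, transversalSum_mem_hookSpan⟩ := by
    ext1 f
    exact Subtype.ext (rho_of_mem_hookSpan (permAct_mem_hookSpan g f.2))
  have superFactorial_ne_zero := Nat.cast_ne_zero (R := ℚ).mpr (superFactorial_ne_zero b)
  rw [rank_one, LinearMap.trace_smulRight]
  simp only [hφ, hc, LinearMap.smul_apply, LinearMap.comp_apply, Submodule.subtype_apply,
    AlgHom.toLinearMap_apply, smul_eq_mul, labelEval_permAct_transversalSum]
  field_simp

end Trace

section Cycles

lemma transitionMatrix_eq_diagonal_add_permMatrix {n : Fin p → ℕ}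
    {g : Equiv.Perm (Fin (∑ t, n t))} {s : Fin p → Fin (∑ t, n t)} {σ : Equiv.Perm (Fin p)}
    (hs : ∀ j, blockIndex n (s j) = j)
    (hg : ∀ j, g (s j) = s (σ j)) (hg_fix : ∀ a ∉ Set.range s, g a = a) :
    transitionMatrix n g = Matrix.diagonal (fun j => (n j : ℚ) - 1) + σ.permMatrix ℚ := by
  ext j k
  have s_mem : s j ∈ block n j := mem_block.mpr (hs j)
  have blockIndex_of_ne (a) (ha : a ∈ (block n j).erase (s j)) : blockIndex n (g a) = j := by
    obtain ⟨hne, haj⟩ := mem_erase.mp ha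
    rw [mem_block] at haj
    rw [hg_fix, haj]
    rintro ⟨i, rfl⟩
    exact hne (by rw [← haj, hs])
  calc transitionMatrix n g j k
      = ∑ a ∈ block n j, if blockIndex n (g a) = k then (1 : ℚ) else 0 := by
        rw [sum_boole]
        rfl
    _ = (∑ _a ∈ (block n j).erase (s j), if j = k then (1 : ℚ) else 0)
          + if σ j = k then 1 else 0 := by
        rw [← sum_erase_add _ _ s_mem, hg, hs,
          sum_congr rfl fun a ha => by rw [blockIndex_of_ne a ha]]
    _ = _ := by
        rw [sum_const, card_erase_of_mem s_mem, nsmul_eq_mul,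
          Nat.cast_pred (card_pos.mpr ⟨_, s_mem⟩), card_block]
        simp [Matrix.diagonal_apply, PEquiv.toMatrix_apply, Equiv.toPEquiv_apply, eq_comm]

theorem trace_rho_comp_permAct_of_isCycle {b : ℕ} {n : Fin (b + 1) → ℕ}
    {g : Equiv.Perm (Fin (∑ t, n t))} {s : Fin (b + 1) → Fin (∑ t, n t)}
    {σ : Equiv.Perm (Fin (b + 1))} (hσ : σ.IsCycle)
    (hs : ∀ j, blockIndex n (s j) = j) (hg : ∀ j, g (s j) = s (σ j))
    (hg_fix : ∀ a ∉ Set.range s, g a = a)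
    (hW : ∀ f ∈ hookSpan (∑ t, n t) b,
      ((rho n).comp (permAct g)) f ∈ hookSpan (∑ t, n t) b) :
    LinearMap.trace ℚ (hookSpan (∑ t, n t) b) (((rho n).comp (permAct g)).restrict hW)
      = (∏ j ∈ σ.support, (n j : ℚ))⁻¹ *
        (∏ j ∈ σ.support, ((n j : ℚ) - 1) + (Equiv.Perm.sign σ : ℤ)) := by
  have n_ne_zero (j : Fin (b + 1)) : (n j : ℚ) ≠ 0 := by
    rw [← card_block (n := n) j]
    exact Nat.cast_ne_zero.mpr (card_ne_zero_of_mem (mem_block.mpr (hs j)))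
  have prod_compl_ne_zero : ∏ j ∈ σ.supportᶜ, (n j : ℚ) ≠ 0 :=
    prod_ne_zero_iff.mpr fun j _ => n_ne_zero j
  rw [trace_rho_comp_permAct, transitionMatrix_eq_diagonal_add_permMatrix hs hg hg_fix,
    det_diagonal_add_permMatrix hσ, ← prod_mul_prod_compl σ.support]
  simp only [sub_add_cancel]
  field_simp

end Cycles

theorem sphericalFunction_hook_p_eq_b_add_one (p b ℓ : ℕ) (n : Fin p → ℕ) (hn : ∀ j, 0 < n j)
    (hp : p = b + 1) (hℓ2 : 2 ≤ ℓ) (hℓp : ℓ ≤ b + 1)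
    (g : Equiv.Perm (Fin (∑ t, n t)))
    (hg1 : ∀ j k : Fin p, (k : ℕ) = (j : ℕ) + 1 → (k : ℕ) < ℓ →
      g (emb n j ⟨0, hn j⟩) = emb n k ⟨0, hn k⟩)
    (hg2 : ∀ j j' : Fin p, (j : ℕ) = ℓ - 1 → (j' : ℕ) = 0 →
      g (emb n j ⟨0, hn j⟩) = emb n j' ⟨0, hn j'⟩)
    (hg3 : ∀ a, (∀ j : Fin p, (j : ℕ) < ℓ → a ≠ emb n j ⟨0, hn j⟩) → g a = a)
    (hW : ∀ f ∈ hookSpan (∑ t, n t) b,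
      ((rho n).comp (permAct g)) f ∈ hookSpan (∑ t, n t) b) :
    LinearMap.trace ℚ (hookSpan (∑ t, n t) b) (((rho n).comp (permAct g)).restrict hW)
      = (∏ i ∈ firstL p ℓ, (n i : ℚ))⁻¹ *
        (esymVal (firstL p ℓ) ℓ (fun i => (n i : ℚ) - 1) + (-1 : ℚ) ^ (ℓ - 1)) := by
  subst hp
  obtain ⟨L, rfl⟩ : ∃ L : Fin (b + 1), ℓ = L + 1 := ⟨⟨ℓ - 1, by omega⟩, by simp; omega⟩
  have L_ne_zero : L ≠ 0 := fun h => by simp [h] at hℓ2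
  set s : Fin (b + 1) → Fin (∑ t, n t) := fun j => emb n j ⟨0, hn j⟩
  have hs (j) : blockIndex n (s j) = j := blockIndex_emb j _
  have hg (j) : g (s j) = s (L.cycleRange j) := by
    rcases lt_trichotomy j L with hj | rfl | hj
    · have := Fin.coe_cycleRange_of_lt hj
      exact hg1 j _ this (by omega)
    · exact hg2 j _ rfl (by simp)
    · rw [Fin.cycleRange_of_gt hj]
      refine hg3 _ fun k hk hjk => ?_
      have : j = k := by rw [← hs j, hjk, blockIndex_emb]
      omega
  have hg_fix (a) (ha : a ∉ Set.range s) : g a = a :=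
    hg3 a fun j _ haj => ha ⟨j, haj.symm⟩
  have support_eq : L.cycleRange.support = firstL (b + 1) (L + 1) := by
    rw [support_cycleRange L_ne_zero, firstL_succ]
  have card_firstL : #(firstL (b + 1) (L + 1)) = L + 1 := by rw [firstL_succ, Fin.card_Iic]
  rw [trace_rho_comp_permAct_of_isCycle (Fin.isCycle_cycleRange L_ne_zero) hs hg hg_fix hW,
    support_eq, ← esymVal_card _ fun j => (n j : ℚ) - 1, card_firstL, Fin.sign_cycleRange]
  simp

end
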